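/- Fix an integer r ≥ 1 and α ∈ [0,1). Let (Gₙ) be any sequence of random graphs defined on a common probability space such that for each n the graph Gₙ has the distribution of the preferential attachment graph G^{PA}_{r,α,n} (the joint distribution of the sequence is arbitrary). Then m(Gₙ) − E[m(Gₙ)] → 0 almost surely as n → ∞. -/

import Mathlib

/-!
The idea is to realise the preferential attachment graph as a function of independent choices, one
per edge, and to apply McDiarmid's bounded differences inequality.

Choosing a vertex proportionally to its degree amounts to choosing a uniform half-edge and taking
its endpoint. Hence the edge `(k, j)` either picks a vertex outright or copies the head of an
earlier edge, with probabilities `paWeight` that depend on `k` only and not on the graph built so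
far. The law `paMass` is thus the image of a product measure under the map `paHead` that follows
the copy instructions (`paMass_eq_sum`).

If the choice of one edge `i` is altered, possibly many edges change their head, namely those that
copy from `i` directly or indirectly. However, they all have the same head, both before and after
the change (`paHead_update`). A directed matching contains at most one of them, so the matching
number changes by at most `1` (`paNu_le_add_one`).

With `n r` independent choices, McDiarmid's inequality (`tail_le`) bounds the probability that the
ratio deviates by `ε` from its mean by `2 exp (-ε² n / (2 r))` (`paMass_tail`). This is summable in
`n`, and the Borel-Cantelli lemma, which needs no assumption on the joint law, concludes.
-/

open scoped Classical

/-- The total degree of the vertex `v` in the preferential attachment graph on the first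
`k` vertices `0, …, k-1` (encoded by the heads function `W`): the in-degree (number of
half-edges `(l,j)` with `1 ≤ l < k` and head `W l j = v`) plus the out-degree
(`r` if `1 ≤ v < k`, and `0` for the starting vertex `0`). -/
noncomputable def paDeg (n r : ℕ) (W : Fin n → Fin r → Fin n) (k : ℕ) (v : Fin n) : ℕ :=
  (Finset.univ.filter
      (fun p : Fin n × Fin r => 1 ≤ (p.1 : ℕ) ∧ (p.1 : ℕ) < k ∧ W p.1 p.2 = v)).card +
    (if 1 ≤ (v : ℕ) ∧ (v : ℕ) < k then r else 0)

/-- The probability that one given new edge added together with vertex `k` has head `v`: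
with probability `α` the head is uniform on the `k` existing vertices and with
probability `1-α` it is chosen proportionally to the total degree in the current graph
(uniform if the current graph has no edges, i.e. if `k = 1`). -/
noncomputable def paStep (n r : ℕ) (α : ℝ) (W : Fin n → Fin r → Fin n) (k : ℕ)
    (v : Fin n) : ℝ :=
  if (v : ℕ) < k then
    (if k = 1 then 1
      else α / k + (1 - α) * (paDeg n r W k v : ℝ) / (2 * r * ((k : ℝ) - 1)))
  else 0

/-- The probability mass of the outcome `W` (the function assigning to each vertex
`k ≥ 1` the heads of its `r` out-edges) under the preferential attachment law
`G^{PA}_{r,α,n}`; the fictitious heads attached to the starting vertex `0` are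
required to equal `0`. -/
noncomputable def paMass (n r : ℕ) (α : ℝ) (W : Fin n → Fin r → Fin n) : ℝ :=
  (if ∀ (k : Fin n) (j : Fin r), (k : ℕ) = 0 → (W k j : ℕ) = 0 then 1 else 0) *
    ∏ k : Fin n, (if (k : ℕ) = 0 then 1 else ∏ j : Fin r, paStep n r α W (k : ℕ) (W k j))

/-- The maximum size of a directed matching of the preferential attachment multigraph
encoded by `W`: a set of edges (pairs `(k,j)`, the `j`-th edge of vertex `k`, with tail
`k` and head `W k j`) no two of which share a tail vertex and no two of which share a
head vertex. -/
noncomputable def paNu (n r : ℕ) (W : Fin n → Fin r → Fin n) : ℕ :=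
  sSup {t | ∃ S : Finset (Fin n × Fin r),
    (∀ p ∈ S, 1 ≤ (p.1 : ℕ)) ∧
    (∀ p ∈ S, ∀ q ∈ S, p.1 = q.1 → p = q) ∧
    (∀ p ∈ S, ∀ q ∈ S, W p.1 p.2 = W q.1 q.2 → p = q) ∧ S.card = t}

/-- The directed matching ratio `m(Gₙ) = ν(Gₙ)/n` of the preferential attachment
multigraph encoded by `W`. -/
noncomputable def paRatio (n r : ℕ) (W : Fin n → Fin r → Fin n) : ℝ :=
  (paNu n r W : ℝ) / n

/-- The mean `E[m(Gₙ)]` of the directed matching ratio of `G^{PA}_{r,α,n}`. -/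
noncomputable def paMean (n r : ℕ) (α : ℝ) : ℝ :=
  ∑ W : Fin n → Fin r → Fin n, paMass n r α W * paRatio n r W


/-! ### The bounded differences inequality on a finite product space -/

lemma exp_mul_le_cosh_add (t y : ℝ) (hy : |y| ≤ 1) :
    Real.exp (t * y) ≤ Real.cosh t + y * Real.sinh t := by
  obtain ⟨h1, h2⟩ := abs_le.1 hy
  have := convexOn_exp.2 (Set.mem_univ t) (Set.mem_univ (-t))
    (by linarith : 0 ≤ (1 + y) / 2) (by linarith : 0 ≤ (1 - y) / 2) (by ring)
  simp only [smul_eq_mul] at this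
  rw [Real.cosh_eq, Real.sinh_eq]
  have e : (1 + y) / 2 * t + (1 - y) / 2 * -t = t * y := by ring
  rw [e] at this
  linarith

/-- Hoeffding's lemma for a finitely supported law and a function of oscillation at most `1`. -/
lemma hoeffding_step {X : Type*} [Fintype X] (q f : X → ℝ) (hq0 : ∀ x, 0 ≤ q x)
    (hq1 : ∑ x, q x = 1) (hf : ∀ x y, |f x - f y| ≤ 1) (t : ℝ) :
    ∑ x, q x * Real.exp (t * (f x - ∑ y, q y * f y)) ≤ Real.exp (t ^ 2 / 2) := by
  set m := ∑ y, q y * f y with hm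
  have hdev : ∀ x, |f x - m| ≤ 1 := by
    intro x
    have e : f x - m = ∑ y, q y * (f x - f y) := by
      simp only [mul_sub, Finset.sum_sub_distrib, ← Finset.sum_mul, hq1, one_mul, hm]
    rw [e]
    calc |∑ y, q y * (f x - f y)| ≤ ∑ y, |q y * (f x - f y)| := Finset.abs_sum_le_sum_abs _ _
      _ ≤ ∑ y, q y := Finset.sum_le_sum fun y _ => by
          rw [abs_mul, abs_of_nonneg (hq0 y)]
          exact mul_le_of_le_one_right (hq0 y) (hf x y)
      _ = 1 := hq1
  calc ∑ x, q x * Real.exp (t * (f x - m))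
      ≤ ∑ x, q x * (Real.cosh t + (f x - m) * Real.sinh t) :=
        Finset.sum_le_sum fun x _ =>
          mul_le_mul_of_nonneg_left (exp_mul_le_cosh_add t _ (hdev x)) (hq0 x)
    _ = (∑ x, q x) * Real.cosh t + ((∑ x, q x * f x) - (∑ x, q x) * m) * Real.sinh t := by
        simp only [Finset.sum_mul, sub_mul, ← Finset.sum_sub_distrib, ← Finset.sum_add_distrib]
        exact Finset.sum_congr rfl fun x _ => by ring
    _ = Real.cosh t := by rw [hq1, ← hm]; ring
    _ ≤ Real.exp (t ^ 2 / 2) := Real.cosh_le_exp_half_sq t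

/-- The exponential moment bound behind McDiarmid's inequality: average out one coordinate by
`hoeffding_step`; the averaged function `G` still has bounded differences. -/
lemma mgf_le_fin {X : Type*} [Fintype X] (t : ℝ) : ∀ (N : ℕ) (p : Fin N → X → ℝ)
    (_ : ∀ i x, 0 ≤ p i x) (_ : ∀ i, ∑ x, p i x = 1) (F : (Fin N → X) → ℝ)
    (_ : ∀ u i x, |F u - F (Function.update u i x)| ≤ 1),
    ∑ u, (∏ i, p i (u i)) * Real.exp (t * (F u - ∑ v, (∏ i, p i (v i)) * F v))
      ≤ Real.exp (t ^ 2 / 2 * N) := by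
  intro N
  induction N with
  | zero => intro p _ _ F _; simp
  | succ N ih =>
    intro p hp0 hp1 F hF
    have split : ∀ g : (Fin (N + 1) → X) → ℝ, ∑ u, (∏ i, p i (u i)) * g u =
        ∑ w : Fin N → X, (∏ i, p i.succ (w i)) * ∑ x, p 0 x * g (Fin.cons x w) := by
      intro g
      rw [← (Fin.consEquiv fun _ => X).sum_comp, Fintype.sum_prod_type_right]
      refine Finset.sum_congr rfl fun w _ => ?_
      rw [Finset.mul_sum]
      refine Finset.sum_congr rfl fun x _ => ?_
      simp [Fin.consEquiv, Fin.prod_univ_succ]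
      ring
    set G : (Fin N → X) → ℝ := fun w => ∑ x, p 0 x * F (Fin.cons x w) with hG
    have hmean : ∑ v, (∏ i, p i (v i)) * F v = ∑ w, (∏ i, p (Fin.succ i) (w i)) * G w := split F
    rw [hmean]
    set m := ∑ w, (∏ i, p (Fin.succ i) (w i)) * G w
    rw [split]
    have hGb : ∀ u i x, |G u - G (Function.update u i x)| ≤ 1 := by
      intro u i x
      simp only [hG, ← Finset.sum_sub_distrib, ← mul_sub]
      refine (Finset.abs_sum_le_sum_abs _ _).trans ((Finset.sum_le_sum fun y _ => ?_).trans (hp1 0).le)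
      rw [abs_mul, abs_of_nonneg (hp0 0 y), Fin.cons_update]
      exact mul_le_of_le_one_right (hp0 0 y) (hF _ _ _)
    have h := ih (fun i => p i.succ) (fun i => hp0 _) (fun i => hp1 _) G hGb
    calc ∑ w, (∏ i, p (Fin.succ i) (w i)) * ∑ x, p 0 x * Real.exp (t * (F (Fin.cons x w) - m))
        = ∑ w, (∏ i, p (Fin.succ i) (w i)) * (Real.exp (t * (G w - m)) *
            ∑ x, p 0 x * Real.exp (t * (F (Fin.cons x w) - G w))) := by
          refine Finset.sum_congr rfl fun w _ => ?_
          congr 1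
          rw [Finset.mul_sum]
          refine Finset.sum_congr rfl fun x _ => ?_
          rw [mul_left_comm, ← Real.exp_add]
          congr 2
          ring
      _ ≤ ∑ w, (∏ i, p (Fin.succ i) (w i)) * (Real.exp (t * (G w - m)) * Real.exp (t ^ 2 / 2)) := by
          refine Finset.sum_le_sum fun w _ => ?_
          refine mul_le_mul_of_nonneg_left ?_ (Finset.prod_nonneg fun i _ => hp0 _ _)
          refine mul_le_mul_of_nonneg_left ?_ (Real.exp_pos _).le
          refine hoeffding_step (p 0) (fun x => F (Fin.cons x w)) (hp0 0) (hp1 0) (fun x y => ?_) t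
          simpa [Fin.update_cons_zero] using hF (Fin.cons x w) 0 y
      _ = (∑ w, (∏ i, p (Fin.succ i) (w i)) * Real.exp (t * (G w - m))) * Real.exp (t ^ 2 / 2) := by
          rw [Finset.sum_mul]
          exact Finset.sum_congr rfl fun w _ => by ring
      _ ≤ Real.exp (t ^ 2 / 2 * N) * Real.exp (t ^ 2 / 2) :=
          mul_le_mul_of_nonneg_right h (Real.exp_pos _).le
      _ = Real.exp (t ^ 2 / 2 * (N + 1 : ℕ)) := by
          rw [← Real.exp_add]; congr 1; push_cast; ring

lemma mgf_le {ι X : Type*} [Fintype ι] [DecidableEq ι] [Fintype X] (t : ℝ) (p : ι → X → ℝ)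
    (hp0 : ∀ i x, 0 ≤ p i x) (hp1 : ∀ i, ∑ x, p i x = 1) (F : (ι → X) → ℝ)
    (hF : ∀ u i x, |F u - F (Function.update u i x)| ≤ 1) :
    ∑ u, (∏ i, p i (u i)) * Real.exp (t * (F u - ∑ v, (∏ i, p i (v i)) * F v))
      ≤ Real.exp (t ^ 2 / 2 * Fintype.card ι) := by
  let e := Fintype.equivFin ι
  have tr : ∀ g : (ι → X) → ℝ, ∑ u, (∏ i, p i (u i)) * g u =
      ∑ w : Fin (Fintype.card ι) → X, (∏ i, p (e.symm i) (w i)) * g (w ∘ e) := by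
    intro g
    rw [← (Equiv.arrowCongr e.symm (Equiv.refl X)).sum_comp]
    refine Finset.sum_congr rfl fun w _ => ?_
    rw [← e.symm.prod_comp]
    simp [Equiv.arrowCongr]
  rw [tr F, tr]
  refine mgf_le_fin t _ (fun i => p (e.symm i)) (fun i => hp0 _) (fun i => hp1 _)
    (fun w => F (w ∘ e)) fun u i x => ?_
  have : Function.update u i x ∘ e = Function.update (u ∘ e) (e.symm i) x := by
    funext j
    by_cases h : j = e.symm i
    · subst h; simp
    · have : e j ≠ i := fun h' => h (by simp [← h'])
      simp [h, this]
  rw [this]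
  exact hF _ _ _

/-- The two-sided bounded differences inequality, with the Chernoff parameter `t` left free. -/
lemma tail_le {ι X : Type*} [Fintype ι] [DecidableEq ι] [Fintype X] (p : ι → X → ℝ)
    (hp0 : ∀ i x, 0 ≤ p i x) (hp1 : ∀ i, ∑ x, p i x = 1) (F : (ι → X) → ℝ)
    (hF : ∀ u i x, |F u - F (Function.update u i x)| ≤ 1) (t a : ℝ) (ht : 0 ≤ t) :
    ∑ u, (∏ i, p i (u i)) * (if a ≤ |F u - ∑ v, (∏ i, p i (v i)) * F v| then 1 else 0)
      ≤ 2 * Real.exp (t ^ 2 / 2 * Fintype.card ι - t * a) := by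
  set m := ∑ v, (∏ i, p i (v i)) * F v with hm
  have h1 := mgf_le t p hp0 hp1 F hF
  have h2 := mgf_le (-t) p hp0 hp1 F hF
  rw [← hm] at h1 h2
  rw [neg_sq] at h2
  calc _ ≤ ∑ u, ((∏ i, p i (u i)) * Real.exp (t * (F u - m)) +
        (∏ i, p i (u i)) * Real.exp (-t * (F u - m))) * Real.exp (-(t * a)) := by
        refine Finset.sum_le_sum fun u _ => ?_
        rw [← mul_add, mul_assoc]
        refine mul_le_mul_of_nonneg_left ?_ (Finset.prod_nonneg fun i _ => hp0 _ _)
        rw [add_mul, ← Real.exp_add, ← Real.exp_add]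
        split_ifs with h
        · rcases le_abs.1 h with h | h
          · have : 1 ≤ Real.exp (t * (F u - m) + -(t * a)) := Real.one_le_exp (by nlinarith)
            linarith [Real.exp_pos (-t * (F u - m) + -(t * a))]
          · have : 1 ≤ Real.exp (-t * (F u - m) + -(t * a)) := Real.one_le_exp (by nlinarith)
            linarith [Real.exp_pos (t * (F u - m) + -(t * a))]
        · positivity
    _ ≤ (2 * Real.exp (t ^ 2 / 2 * Fintype.card ι)) * Real.exp (-(t * a)) := by
        rw [← Finset.sum_mul, Finset.sum_add_distrib]
        exact mul_le_mul_of_nonneg_right (by linarith) (Real.exp_pos _).le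
    _ = _ := by rw [mul_assoc, ← Real.exp_add, sub_eq_add_neg]

/-! ### Preferential attachment as a function of independent choices -/

/-- The outcome of the randomness used for one edge: either a vertex `v`, which becomes the head
of the edge, or an earlier edge `e`, whose head is copied. -/
abbrev PaChoice (n r : ℕ) : Type := Fin n ⊕ (Fin n × Fin r)

/-- The probability that an edge with tail `k` makes a given choice. A degree-proportional head is an
endpoint of a uniform half-edge: the `r` half-edges at the tail `v` count towards the choice of the
vertex `v`, while a half-edge at the head of `e` is the choice of copying the head of `e`. For `k ≤ 1`
the choice is deterministically the vertex `0`; this includes the fictitious edges of vertex `0`. -/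
noncomputable def paWeight (n r : ℕ) (α : ℝ) (k : ℕ) : PaChoice n r → ℝ
  | Sum.inl v =>
      if k ≤ 1 then (if (v : ℕ) = 0 then 1 else 0)
      else if (v : ℕ) < k then
        α / k + (1 - α) * ((if 1 ≤ (v : ℕ) ∧ (v : ℕ) < k then r else 0 : ℕ) : ℝ) /
          (2 * r * ((k : ℝ) - 1))
      else 0
  | Sum.inr e =>
      if 1 ≤ (e.1 : ℕ) ∧ (e.1 : ℕ) < k then (1 - α) / (2 * r * ((k : ℝ) - 1)) else 0

/-- The head prescribed by a choice when the heads of the other edges are given by `W`. -/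
def paEval {n r : ℕ} (W : Fin n → Fin r → Fin n) : PaChoice n r → Fin n
  | Sum.inl v => v
  | Sum.inr e => W e.1 e.2

/-- The heads function determined by a family of choices, obtained by following the copy
instructions back in time. Copy choices that do not point to an edge with an earlier tail have weight
zero; they get the junk head `k`. -/
noncomputable def paHead {n r : ℕ} (u : Fin n × Fin r → PaChoice n r) (k : Fin n) (j : Fin r) :
    Fin n :=
  match u (k, j) with
  | Sum.inl v => v
  | Sum.inr e => if _h : e.1 < k then paHead u e.1 e.2 else k
termination_by k

lemma paWeight_nonneg (n r : ℕ) (α : ℝ) (hα : α ∈ Set.Ico (0 : ℝ) 1) (k : ℕ) (x : PaChoice n r) :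
    0 ≤ paWeight n r α k x := by
  have h0 := hα.1
  have h1 : 0 ≤ 1 - α := by linarith [hα.2]
  have hk' : 1 ≤ k → (0 : ℝ) ≤ (k : ℝ) - 1 := fun h => by
    have : (1 : ℝ) ≤ k := by exact_mod_cast h
    linarith
  rcases x with v | e
  · simp only [paWeight]
    by_cases hk : k ≤ 1
    · rw [if_pos hk]
      split_ifs <;> norm_num
    · rw [if_neg hk]
      have := hk' (by omega)
      split_ifs <;> positivity
  · simp only [paWeight]
    by_cases hk : 1 ≤ (e.1 : ℕ) ∧ (e.1 : ℕ) < k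
    · rw [if_pos hk]
      have := hk' (by omega)
      positivity
    · rw [if_neg hk]

lemma card_fin_lt (n k : ℕ) (hk : k ≤ n) :
    (Finset.univ.filter fun v : Fin n => (v : ℕ) < k).card = k := by
  rw [Fin.card_filter_val_lt, min_eq_right hk]

lemma card_fin_pos_lt (n k : ℕ) (hk : k ≤ n) (h1 : 1 ≤ k) :
    (Finset.univ.filter fun v : Fin n => 1 ≤ (v : ℕ) ∧ (v : ℕ) < k).card = k - 1 := by
  have e : (Finset.univ.filter fun v : Fin n => 1 ≤ (v : ℕ) ∧ (v : ℕ) < k) =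
      (Finset.univ.filter fun v : Fin n => (v : ℕ) < k).erase ⟨0, by omega⟩ := by
    ext v
    simp only [Finset.mem_filter, Finset.mem_univ, true_and, Finset.mem_erase, ne_eq, Fin.ext_iff]
    omega
  rw [e, Finset.card_erase_of_mem (by simp; omega), card_fin_lt n k hk]

lemma paWeight_sum (n r : ℕ) (hr : 1 ≤ r) (α : ℝ) (k : ℕ) (hk : k < n) :
    ∑ x, paWeight n r α k x = 1 := by
  rw [Fintype.sum_sum_type]
  rcases Nat.lt_or_ge 1 k with h | h
  · have hk' : (k : ℝ) - 1 ≠ 0 := by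
      have : (2 : ℝ) ≤ k := by exact_mod_cast h
      intro h; linarith
    have hr' : (r : ℝ) ≠ 0 := by positivity
    have hk0 : (k : ℝ) ≠ 0 := by positivity
    have e1 : ∀ v : Fin n, paWeight n r α k (Sum.inl v) =
        (if (v : ℕ) < k then α / k else 0) +
        (if 1 ≤ (v : ℕ) ∧ (v : ℕ) < k then (1 - α) * r / (2 * r * ((k : ℝ) - 1)) else 0) := by
      intro v
      simp only [paWeight, if_neg (not_le.2 h)]
      by_cases a : (v : ℕ) < k <;> by_cases b : 1 ≤ (v : ℕ) <;> simp [a, b]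
    have e2 : ∀ v : Fin n, ∀ j : Fin r, paWeight n r α k (Sum.inr (v, j)) =
        (if 1 ≤ (v : ℕ) ∧ (v : ℕ) < k then (1 - α) / (2 * r * ((k : ℝ) - 1)) else 0) := by
      intro v j; rfl
    rw [Fintype.sum_prod_type]
    simp only [e1, e2, Finset.sum_add_distrib, Finset.sum_const, Finset.card_univ, Fintype.card_fin,
      nsmul_eq_mul, ← Finset.mul_sum]
    simp only [← Finset.sum_filter, Finset.sum_const, card_fin_lt n k hk.le,
      card_fin_pos_lt n k hk.le h.le, nsmul_eq_mul, Nat.cast_sub h.le, Nat.cast_one]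
    field_simp
    ring
  · have e2 : ∀ e : Fin n × Fin r, paWeight n r α k (Sum.inr e) = 0 := by
      intro e
      simp only [paWeight]
      rw [if_neg (by omega)]
    have e1 : ∀ v : Fin n, paWeight n r α k (Sum.inl v) =
        if v = (⟨0, by omega⟩ : Fin n) then 1 else 0 := by
      intro v
      simp only [paWeight, if_pos h, Fin.ext_iff]
    simp [e1, e2]

/-- The law of the head of an edge with tail `k`, given the earlier heads, is `paStep` (and the point
mass at `0` if `k = 0`). The hypothesis is needed because `paStep` vanishes at `v ≥ k` by fiat, even
if some earlier edge of a nonsensical `W` has head `v`. -/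
lemma sum_paWeight_eval (n r : ℕ) (α : ℝ) (W : Fin n → Fin r → Fin n) (k : ℕ)
    (hW : ∀ (l : Fin n) (j : Fin r), 1 ≤ (l : ℕ) → (l : ℕ) < k → (W l j : ℕ) < k)
    (v : Fin n) : ∑ x, paWeight n r α k x * (if paEval W x = v then 1 else 0) =
      if k = 0 then (if (v : ℕ) = 0 then 1 else 0) else paStep n r α W k v := by
  rw [Fintype.sum_sum_type]
  have hL : ∑ w : Fin n, paWeight n r α k (Sum.inl w) * (if paEval W (Sum.inl w) = v then 1 else 0)
      = paWeight n r α k (Sum.inl v) := by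
    rw [Finset.sum_eq_single v]
    · rw [if_pos (show paEval W (Sum.inl v) = v from rfl), mul_one]
    · intro w _ hw
      rw [if_neg (show ¬ paEval W (Sum.inl w) = v from hw), mul_zero]
    · simp
  have hR : ∑ e : Fin n × Fin r, paWeight n r α k (Sum.inr e) *
        (if paEval W (Sum.inr e) = v then 1 else 0) =
        (Finset.univ.filter (fun p : Fin n × Fin r =>
          1 ≤ (p.1 : ℕ) ∧ (p.1 : ℕ) < k ∧ W p.1 p.2 = v)).card *
          ((1 - α) / (2 * r * ((k : ℝ) - 1))) := by
      rw [← nsmul_eq_mul, ← Finset.sum_const, Finset.sum_filter]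
      refine Finset.sum_congr rfl fun e _ => ?_
      rw [mul_ite, mul_one, mul_zero]
      change (if W e.1 e.2 = v then (if 1 ≤ (e.1 : ℕ) ∧ (e.1 : ℕ) < k then _ else _) else _) = _
      split_ifs <;> first | rfl | (exfalso; tauto)
  rw [hL, hR]
  rcases Nat.lt_or_ge 1 k with h | h
  · rw [if_neg (by omega)]
    simp only [paWeight, paStep, if_neg (not_le.2 h)]
    rw [if_neg (by omega : ¬ k = 1)]
    by_cases hv : (v : ℕ) < k
    · simp only [hv, if_true, paDeg]
      push_cast
      ring
    · rw [if_neg hv, if_neg hv, Finset.card_eq_zero.2, Nat.cast_zero, zero_mul, add_zero]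
      rw [Finset.filter_eq_empty_iff]
      rintro e _ ⟨h1, h2, h3⟩
      exact hv (h3 ▸ hW e.1 e.2 h1 h2)
  · rw [Finset.card_eq_zero.2 (by
      rw [Finset.filter_eq_empty_iff]
      rintro e _ ⟨h1, h2, h3⟩
      omega)]
    simp only [Nat.cast_zero, zero_mul, add_zero, paWeight, if_pos h, paStep]
    obtain rfl | rfl : k = 0 ∨ k = 1 := by omega
    · simp
    · simp

lemma paMass_eq_prod_sum (n r : ℕ) (α : ℝ) (W : Fin n → Fin r → Fin n) :
    paMass n r α W = ∏ e : Fin n × Fin r, ∑ x, paWeight n r α e.1 x *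
      (if paEval W x = W e.1 e.2 then 1 else 0) := by
  set q : Fin n × Fin r → ℝ := fun e => if (e.1 : ℕ) = 0 then
    (if (W e.1 e.2 : ℕ) = 0 then 1 else 0) else paStep n r α W e.1 (W e.1 e.2) with hq
  have hmass : paMass n r α W = ∏ e, q e := by
    unfold paMass
    rw [Fintype.prod_prod_type]
    by_cases h : ∀ (k : Fin n) (j : Fin r), (k : ℕ) = 0 → (W k j : ℕ) = 0
    · rw [if_pos h, one_mul]
      refine Finset.prod_congr rfl fun k _ => ?_
      by_cases hk : (k : ℕ) = 0
      · rw [if_pos hk, Finset.prod_eq_one]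
        intro j _
        simp only [hq, if_pos hk, if_pos (h k j hk)]
      · simp only [hq, if_neg hk]
    · rw [if_neg h, zero_mul]
      push Not at h
      obtain ⟨k, j, hk, hW⟩ := h
      symm
      refine Finset.prod_eq_zero (Finset.mem_univ k) (Finset.prod_eq_zero (Finset.mem_univ j) ?_)
      simp only [hq, if_pos hk, if_neg hW]
  rw [hmass]
  by_cases hleg : ∀ (l : Fin n) (j : Fin r), 1 ≤ (l : ℕ) → (W l j : ℕ) < l
  · refine Finset.prod_congr rfl fun e _ => ?_
    rw [sum_paWeight_eval n r α W e.1 (fun l j h1 h2 => (hleg l j h1).trans h2)]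
  · -- Both sides vanish. On the right, the factor of an edge whose tail is the first vertex with an
    -- illegal head is zero, as the edges with smaller tails have legal heads.
    have hex : ∃ l : ℕ, ∃ (h : l < n) (j : Fin r), 1 ≤ l ∧ ¬ (W ⟨l, h⟩ j : ℕ) < l := by
      push Not at hleg
      obtain ⟨l, j, h1, h2⟩ := hleg
      exact ⟨l, l.2, j, h1, not_lt.2 h2⟩
    obtain ⟨hl, j, h1, h2⟩ := Nat.find_spec hex
    have hmin := fun m => Nat.find_min hex (m := m)
    set l := Nat.find hex
    have hz : q (⟨l, hl⟩, j) = 0 := by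
      have : ¬ l = 0 := by omega
      simp only [hq, if_neg this, paStep]
      exact if_neg h2
    rw [Finset.prod_eq_zero (Finset.mem_univ (⟨l, hl⟩, j)) hz]
    symm
    refine Finset.prod_eq_zero (Finset.mem_univ (⟨l, hl⟩, j)) ?_
    rw [sum_paWeight_eval n r α W l]
    · exact hz
    · intro m j' hm1 hm2
      by_contra hc
      exact hmin m hm2 ⟨m.2, j', hm1, fun h => hc (h.trans hm2)⟩

lemma paHead_eq {n r : ℕ} (u : Fin n × Fin r → PaChoice n r) (k : Fin n) (j : Fin r) :
    paHead u k j = match u (k, j) with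
      | Sum.inl v => v
      | Sum.inr e => if e.1 < k then paHead u e.1 e.2 else k := by
  rw [paHead]
  rcases u (k, j) with v | e <;> simp

/-- When all copy instructions point to earlier edges, `paHead u` is the unique heads function
consistent with the choices `u`. -/
lemma compat_iff {n r : ℕ} (u : Fin n × Fin r → PaChoice n r) (W : Fin n → Fin r → Fin n)
    (hu : ∀ (k : Fin n) (j : Fin r) (e : Fin n × Fin r), u (k, j) = Sum.inr e → e.1 < k) :
    (∀ e : Fin n × Fin r, paEval W (u e) = W e.1 e.2) ↔ paHead u = W := by
  constructor
  · intro h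
    suffices ∀ m : ℕ, ∀ (k : Fin n) (j : Fin r), (k : ℕ) = m → paHead u k j = W k j by
      funext k j
      exact this k k j rfl
    intro m
    induction m using Nat.strong_induction_on with
    | _ m ih =>
      rintro k j rfl
      have hk := h (k, j)
      rw [paHead_eq]
      rcases hx : u (k, j) with v | e
      · rw [hx] at hk
        exact hk
      · rw [hx] at hk
        have hlt := hu k j e hx
        simp only [if_pos hlt]
        rw [ih e.1 hlt e.1 e.2 rfl]
        exact hk
  · rintro rfl ⟨k, j⟩
    rw [paHead_eq u k j]
    rcases hx : u (k, j) with v | e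
    · rfl
    · simp only [if_pos (hu k j e hx)]
      rfl

/-- The preferential attachment law is the image under `paHead` of a product measure: expanding the
product over edges of sums over choices leaves exactly the families of choices consistent with
`W`. -/
lemma paMass_eq_sum (n r : ℕ) (α : ℝ) (W : Fin n → Fin r → Fin n) :
    paMass n r α W = ∑ u : Fin n × Fin r → PaChoice n r,
      (∏ e, paWeight n r α e.1 (u e)) * (if paHead u = W then 1 else 0) := by
  rw [paMass_eq_prod_sum, Fintype.prod_sum]
  refine Finset.sum_congr rfl fun u _ => ?_
  rw [Finset.prod_mul_distrib]
  by_cases hu : ∀ (k : Fin n) (j : Fin r) (e : Fin n × Fin r), u (k, j) = Sum.inr e → e.1 < k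
  · congr 1
    by_cases h : ∀ e : Fin n × Fin r, paEval W (u e) = W e.1 e.2
    · rw [if_pos ((compat_iff u W hu).1 h)]
      exact Finset.prod_eq_one fun e _ => if_pos (h e)
    · rw [if_neg (mt (compat_iff u W hu).2 h)]
      push Not at h
      obtain ⟨e, he⟩ := h
      exact Finset.prod_eq_zero (Finset.mem_univ e) (if_neg he)
  · push Not at hu
    obtain ⟨k, j, e, hx, hle⟩ := hu
    rw [Finset.prod_eq_zero (Finset.mem_univ (k, j)), zero_mul, zero_mul]
    rw [hx]
    simp only [paWeight]
    rw [if_neg]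
    rintro ⟨_, h⟩
    exact absurd hle (not_le.2 h)

lemma sum_paMass_mul (n r : ℕ) (α : ℝ) (g : (Fin n → Fin r → Fin n) → ℝ) :
    ∑ W, paMass n r α W * g W = ∑ u : Fin n × Fin r → PaChoice n r,
      (∏ e, paWeight n r α e.1 (u e)) * g (paHead u) := by
  simp only [paMass_eq_sum, Finset.sum_mul]
  rw [Finset.sum_comm]
  refine Finset.sum_congr rfl fun u _ => ?_
  rw [Finset.sum_eq_single (paHead u)]
  · rw [if_pos rfl, mul_one]
  · intro W _ hW
    rw [if_neg hW.symm, mul_zero, zero_mul]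
  · simp

/-! ### The matching number is Lipschitz in the choices -/

/-- Changing the choice of the single edge `i` only affects the edges that copy from `i`, directly or
indirectly, and all of these share the head of `i` both before and after the change. The induction
is on `m = k`. -/
lemma paHead_update {n r : ℕ} (u u' : Fin n × Fin r → PaChoice n r) (i : Fin n × Fin r)
    (h : ∀ e, e ≠ i → u e = u' e) : ∀ (m : ℕ) (k : Fin n) (j : Fin r), (k : ℕ) = m →
    paHead u k j = paHead u' k j ∨
      (paHead u k j = paHead u i.1 i.2 ∧ paHead u' k j = paHead u' i.1 i.2) := by
  intro m
  induction m using Nat.strong_induction_on with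
  | _ m ih =>
    rintro k j rfl
    by_cases hi : (k, j) = i
    · subst hi
      exact Or.inr ⟨rfl, rfl⟩
    · rw [paHead_eq u k j, paHead_eq u' k j, h _ hi]
      rcases u' (k, j) with v | e
      · exact Or.inl rfl
      · by_cases hlt : e.1 < k
        · simp only [if_pos hlt]
          exact ih e.1 hlt e.1 e.2 rfl
        · simp only [if_neg hlt, true_or]

lemma paNu_bddAbove (n r : ℕ) (W : Fin n → Fin r → Fin n) :
    BddAbove {t | ∃ S : Finset (Fin n × Fin r),
    (∀ p ∈ S, 1 ≤ (p.1 : ℕ)) ∧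
    (∀ p ∈ S, ∀ q ∈ S, p.1 = q.1 → p = q) ∧
    (∀ p ∈ S, ∀ q ∈ S, W p.1 p.2 = W q.1 q.2 → p = q) ∧ S.card = t} := by
  refine ⟨Fintype.card (Fin n × Fin r), ?_⟩
  rintro t ⟨S, -, -, -, rfl⟩
  exact S.card_le_univ

/-- If all edges whose head changes had a common head `v`, a matching contains at most one of them,
and deleting it leaves a matching for the new heads. -/
lemma paNu_le_add_one (n r : ℕ) (W W' : Fin n → Fin r → Fin n) (v v' : Fin n)
    (h : ∀ k j, W k j = W' k j ∨ (W k j = v ∧ W' k j = v')) :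
    paNu n r W ≤ paNu n r W' + 1 := by
  have hmem := Nat.sSup_mem (s := {t | ∃ S : Finset (Fin n × Fin r),
    (∀ p ∈ S, 1 ≤ (p.1 : ℕ)) ∧
    (∀ p ∈ S, ∀ q ∈ S, p.1 = q.1 → p = q) ∧
    (∀ p ∈ S, ∀ q ∈ S, W p.1 p.2 = W q.1 q.2 → p = q) ∧ S.card = t})
    ⟨0, ∅, by simp⟩ (paNu_bddAbove n r W)
  obtain ⟨S, h1, h2, h3, hcard⟩ := hmem
  change S.card = paNu n r W at hcard
  rw [← hcard]
  have hT : (S.filter fun e => W e.1 e.2 = W' e.1 e.2).card ≤ paNu n r W' := by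
    refine le_csSup (paNu_bddAbove n r W') ⟨_, ?_, ?_, ?_, rfl⟩
    · intro p hp
      exact h1 p (Finset.mem_filter.1 hp).1
    · intro p hp q hq
      exact h2 p (Finset.mem_filter.1 hp).1 q (Finset.mem_filter.1 hq).1
    · intro p hp q hq hpq
      obtain ⟨hp, hp'⟩ := Finset.mem_filter.1 hp
      obtain ⟨hq, hq'⟩ := Finset.mem_filter.1 hq
      exact h3 p hp q hq (by rw [hp', hq', hpq])
  have hD : (S.filter fun e => ¬ W e.1 e.2 = W' e.1 e.2).card ≤ 1 := by
    rw [Finset.card_le_one]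
    intro p hp q hq
    obtain ⟨hp, hp'⟩ := Finset.mem_filter.1 hp
    obtain ⟨hq, hq'⟩ := Finset.mem_filter.1 hq
    refine h3 p hp q hq ?_
    rw [((h p.1 p.2).resolve_left hp').1, ((h q.1 q.2).resolve_left hq').1]
  have := Finset.card_filter_add_card_filter_not (s := S) (fun e => W e.1 e.2 = W' e.1 e.2)
  omega

lemma paNu_head_lipschitz {n r : ℕ} (u : Fin n × Fin r → PaChoice n r) (i : Fin n × Fin r)
    (x : PaChoice n r) :
    |(paNu n r (paHead u) : ℝ) - paNu n r (paHead (Function.update u i x))| ≤ 1 := by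
  have h := fun (k : Fin n) (j : Fin r) => paHead_update u (Function.update u i x) i
    (fun e he => (Function.update_of_ne he _ _).symm) k k j rfl
  have h1 := paNu_le_add_one n r _ _ _ _ h
  have h2 := paNu_le_add_one n r _ _ _ _
    (fun k j => (h k j).imp Eq.symm And.symm)
  have h1' : (paNu n r (paHead u) : ℝ) ≤ paNu n r (paHead (Function.update u i x)) + 1 := by
    exact_mod_cast h1
  have h2' : (paNu n r (paHead (Function.update u i x)) : ℝ) ≤ paNu n r (paHead u) + 1 := by
    exact_mod_cast h2
  rw [abs_le]
  constructor <;> linarith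

/-! ### Concentration and almost sure convergence -/

lemma paMass_nonneg (n r : ℕ) (α : ℝ) (hα : α ∈ Set.Ico (0 : ℝ) 1) (W : Fin n → Fin r → Fin n) :
    0 ≤ paMass n r α W := by
  rw [paMass_eq_sum]
  refine Finset.sum_nonneg fun u _ => mul_nonneg
    (Finset.prod_nonneg fun e _ => paWeight_nonneg n r α hα _ _) ?_
  split_ifs <;> norm_num

/-- Exponential concentration of the matching ratio, from `tail_le` with `N = n r`, deviation `ε n`
and the optimal parameter `t = ε / r`. -/
lemma paMass_tail (n r : ℕ) (hr : 1 ≤ r) (hn : 1 ≤ n) (α : ℝ) (hα : α ∈ Set.Ico (0 : ℝ) 1)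
    (ε : ℝ) (hε : 0 ≤ ε) :
    ∑ W, paMass n r α W * (if ε ≤ |paRatio n r W - paMean n r α| then 1 else 0) ≤
      2 * Real.exp (-(ε ^ 2 / (2 * r))) ^ n := by
  have hn0 : (0 : ℝ) < n := by exact_mod_cast hn
  have hr0 : (0 : ℝ) < r := by exact_mod_cast hr
  have h := tail_le (fun e : Fin n × Fin r => paWeight n r α e.1)
    (fun e x => paWeight_nonneg n r α hα _ x) (fun e => paWeight_sum n r hr α e.1 e.1.2)
    (fun u => (paNu n r (paHead u) : ℝ)) paNu_head_lipschitz (ε / r) (ε * n) (by positivity)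
  rw [sum_paMass_mul n r α
    (fun W => if ε ≤ |paRatio n r W - paMean n r α| then (1 : ℝ) else 0)]
  have hmean : ∑ u : Fin n × Fin r → PaChoice n r,
      (∏ e, paWeight n r α e.1 (u e)) * (paNu n r (paHead u) : ℝ) = n * paMean n r α := by
    rw [paMean, sum_paMass_mul, Finset.mul_sum]
    refine Finset.sum_congr rfl fun u _ => ?_
    simp only [paRatio]
    field_simp
  rw [hmean] at h
  refine le_trans (le_of_eq ?_) (h.trans (le_of_eq ?_))
  · refine Finset.sum_congr rfl fun u _ => ?_
    congr 1
    refine if_congr ?_ rfl rfl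
    have : (paNu n r (paHead u) : ℝ) - n * paMean n r α =
        n * (paRatio n r (paHead u) - paMean n r α) := by
      simp only [paRatio]
      field_simp
    rw [this, abs_mul, abs_of_pos hn0, mul_comm ε, mul_le_mul_iff_right₀ hn0]
  · rw [← Real.exp_nat_mul, Fintype.card_prod, Fintype.card_fin, Fintype.card_fin]
    congr 2
    push_cast
    field_simp
    ring

/-- Almost sure concentration of the directed matching ratio of preferential attachment
graphs: if `(Gₙ)` is any sequence of random graphs on a common probability space such
that each `Gₙ` (encoded by its heads function `Wseq n`) has the law of `G^{PA}_{r,α,n}`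
(the joint distribution of the sequence being arbitrary), then
`m(Gₙ) − E[m(Gₙ)] → 0` almost surely. -/
theorem preferential_attachment_ratio_minus_mean_tendsto_zero
    (r : ℕ) (hr : 1 ≤ r) (α : ℝ) (hα : α ∈ Set.Ico (0 : ℝ) 1)
    {Ω : Type*} [MeasurableSpace Ω] (μ : MeasureTheory.Measure Ω)
    [MeasureTheory.IsProbabilityMeasure μ]
    (Wseq : (n : ℕ) → Ω → (Fin n → Fin r → Fin n))
    (hlaw : ∀ (n : ℕ) (W : Fin n → Fin r → Fin n),
      μ {ω | Wseq n ω = W} = ENNReal.ofReal (paMass n r α W)) :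
    ∀ᵐ ω ∂μ, Filter.Tendsto (fun n => paRatio n r (Wseq n ω) - paMean n r α)
      Filter.atTop (nhds 0) := by
  have hr0 : (0 : ℝ) < r := by exact_mod_cast hr
  -- The events need not be measurable; subadditivity of the outer measure suffices.
  have hbad : ∀ (ε : ℝ), 0 ≤ ε → ∀ n : ℕ,
      μ {ω | ε ≤ |paRatio (n + 1) r (Wseq (n + 1) ω) - paMean (n + 1) r α|} ≤
        ENNReal.ofReal (2 * Real.exp (-(ε ^ 2 / (2 * r))) ^ (n + 1)) := by
    intro ε hε n
    let B := Finset.univ.filter fun W : Fin (n + 1) → Fin r → Fin (n + 1) =>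
      ε ≤ |paRatio (n + 1) r W - paMean (n + 1) r α|
    have hsub : {ω | ε ≤ |paRatio (n + 1) r (Wseq (n + 1) ω) - paMean (n + 1) r α|} ⊆
        ⋃ W ∈ B, {ω | Wseq (n + 1) ω = W} := by
      intro ω hω
      simp only [Set.mem_iUnion]
      exact ⟨Wseq (n + 1) ω, by simpa [B] using hω, rfl⟩
    refine (MeasureTheory.measure_mono hsub).trans
      ((MeasureTheory.measure_biUnion_finset_le _ _).trans ?_)
    simp only [hlaw]
    rw [← ENNReal.ofReal_sum_of_nonneg fun W _ => paMass_nonneg _ r α hα W]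
    refine ENNReal.ofReal_le_ofReal (le_trans (le_of_eq ?_)
      (paMass_tail (n + 1) r hr (by omega) α hα ε hε))
    simp only [mul_ite, mul_one, mul_zero, B, Finset.sum_filter]
  have hae : ∀ m : ℕ, ∀ᵐ ω ∂μ, ∀ᶠ n in Filter.atTop,
      |paRatio (n + 1) r (Wseq (n + 1) ω) - paMean (n + 1) r α| < 1 / ((m : ℝ) + 1) := by
    intro m
    have hε : (0 : ℝ) < 1 / ((m : ℝ) + 1) := by positivity
    have hsum : Summable fun n : ℕ =>
        2 * Real.exp (-((1 / ((m : ℝ) + 1)) ^ 2 / (2 * r))) ^ (n + 1) := by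
      refine Summable.mul_left _ ((summable_nat_add_iff 1).2
        (summable_geometric_of_lt_one (Real.exp_pos _).le ?_))
      rw [Real.exp_lt_one_iff]
      have : 0 < (1 / ((m : ℝ) + 1)) ^ 2 / (2 * r) := by positivity
      linarith
    have hfin : ∑' n : ℕ, μ {ω | 1 / ((m : ℝ) + 1) ≤
        |paRatio (n + 1) r (Wseq (n + 1) ω) - paMean (n + 1) r α|} ≠ ⊤ :=
      ne_top_of_le_ne_top hsum.tsum_ofReal_ne_top (ENNReal.tsum_le_tsum (hbad _ hε.le))
    filter_upwards [MeasureTheory.ae_eventually_notMem hfin] with ω hω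
    filter_upwards [hω] with n hn
    simpa using hn
  filter_upwards [MeasureTheory.ae_all_iff.2 hae] with ω hω
  rw [← Filter.tendsto_add_atTop_iff_nat 1, Metric.tendsto_atTop']
  intro ε hε
  obtain ⟨m, hm⟩ := exists_nat_one_div_lt hε
  obtain ⟨N, hN⟩ := Filter.eventually_atTop.1 (hω m)
  refine ⟨N, fun n hn => ?_⟩
  rw [Real.dist_eq, sub_zero]
  exact (hN n hn.le).trans hm
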